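/- arXiv:0904.4199 — 2 statements merged into one kernel-verified Lean document; each statement's English description precedes it below -/
import Mathlib

section
/- Let L > 0 and let f, g : (−L, L) → ℝ be measurable functions with 0 ≤ sign(ξ)·f(ξ) ≤ 1 and 0 ≤ sign(ξ)·g(ξ) ≤ 1 for a.e. ξ. Then ∫_{−L}^{L} 1_{{f(ξ) ≥ g(ξ)}} · [(𝓜f(ξ) − 𝓜g(ξ)) − (f(ξ) − g(ξ))] dξ ≤ 0. -/
/-! Write `u = ∫ f`, `v = ∫ g`. The Maxwellian `M(u, ·)` is nondecreasing in `u`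
(`Mfun_mono`), so `M(u, ·) - M(v, ·)` has the constant sign of `u - v`.

If `u ≤ v`, the integrand is pointwise nonpositive. If `v ≤ u`, then off the set `{g ≤ f}` the
quantity `(M(u, ξ) - M(v, ξ)) - (f ξ - g ξ)` is nonnegative, so dropping the indicator can only
increase the integral; without the indicator the integral is `(u - v) - (u - v) = 0`, because
`∫ M(u, ·) = u` for `|u| ≤ L` (`integral_Mfun`). The bound `|u| ≤ L` is itself obtained by
integrating `M(-L, ·) ≤ f ≤ M(L, ·)`. -/


open MeasureTheory Set Filter

/-- The Maxwellian `M(u, ξ)`: equals `1` on `0 < ξ < u`, `-1` on `u < ξ < 0`, `0` otherwise. -/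
noncomputable def Mfun (u ξ : ℝ) : ℝ :=
  if 0 < ξ ∧ ξ < u then 1 else if u < ξ ∧ ξ < 0 then -1 else 0

/-- The projection `𝓜 f = M(u_f, ·)` with `u_f = ∫_{-L}^{L} f`. -/
noncomputable def proj (L : ℝ) (f : ℝ → ℝ) (ξ : ℝ) : ℝ :=
  Mfun (∫ ζ in (-L)..L, f ζ) ξ

lemma Mfun_mono {u v : ℝ} (h : u ≤ v) (ξ : ℝ) : Mfun u ξ ≤ Mfun v ξ := by
  unfold Mfun
  split_ifs <;> grind

lemma Mfun_eq (u : ℝ) :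
    Mfun u = fun ξ => (Ioo 0 u).indicator (fun _ => (1 : ℝ)) ξ
      - (Ioo u 0).indicator (fun _ => (1 : ℝ)) ξ := by
  funext ξ
  simp only [Mfun, indicator, mem_Ioo]
  split_ifs <;> grind

lemma intervalIntegrable_indicator_Ioo (a b c d : ℝ) :
    IntervalIntegrable ((Ioo a b).indicator (fun _ => (1 : ℝ))) volume c d :=
  ((integrable_indicator_iff measurableSet_Ioo).2
    (integrableOn_const (by simp))).intervalIntegrable

lemma intervalIntegrable_Mfun (u c d : ℝ) : IntervalIntegrable (Mfun u) volume c d := by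
  rw [Mfun_eq]
  exact (intervalIntegrable_indicator_Ioo _ _ _ _).sub (intervalIntegrable_indicator_Ioo _ _ _ _)

lemma integral_indicator_Ioo {L a b : ℝ} (hL : 0 < L) (ha : -L ≤ a) (hb : b ≤ L) :
    ∫ ξ in (-L)..L, (Ioo a b).indicator (fun _ => (1 : ℝ)) ξ = max (b - a) 0 := by
  rw [intervalIntegral.integral_of_le (by linarith), setIntegral_indicator measurableSet_Ioo,
    inter_eq_self_of_subset_right (s := Ioc (-L) L) (t := Ioo a b)
      (fun x hx => ⟨ha.trans_lt hx.1, hx.2.le.trans hb⟩)]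
  simp [Measure.real, ENNReal.toReal_ofReal']

lemma integral_Mfun {L u : ℝ} (hL : 0 < L) (h₁ : -L ≤ u) (h₂ : u ≤ L) :
    ∫ ξ in (-L)..L, Mfun u ξ = u := by
  rw [Mfun_eq, intervalIntegral.integral_sub (intervalIntegrable_indicator_Ioo _ _ _ _)
    (intervalIntegrable_indicator_Ioo _ _ _ _), integral_indicator_Ioo hL (by linarith) h₂,
    integral_indicator_Ioo hL h₁ hL.le]
  rcases le_total 0 u with h | h <;> simp [h]

/-- The sign condition on `f` says exactly that `f` lies between the two extreme Maxwellians
(up to the null set `{0}`, where `sign` vanishes). -/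
lemma ae_Mfun_le {L : ℝ} {f : ℝ → ℝ}
    (hbf : ∀ᵐ ξ ∂(volume.restrict (Ioo (-L) L)),
      0 ≤ Real.sign ξ * f ξ ∧ Real.sign ξ * f ξ ≤ 1) :
    ∀ᵐ ξ ∂(volume.restrict (Ioo (-L) L)), Mfun (-L) ξ ≤ f ξ ∧ f ξ ≤ Mfun L ξ := by
  have h0 : ∀ᵐ ξ ∂(volume.restrict (Ioo (-L) L)), ξ ≠ (0 : ℝ) :=
    ae_restrict_of_ae (Measure.ae_ne volume 0)
  filter_upwards [hbf, h0, ae_restrict_mem measurableSet_Ioo] with ξ h hne hm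
  obtain ⟨h₁, h₂⟩ := h
  obtain ⟨m₁, m₂⟩ := hm
  rcases lt_or_gt_of_ne hne with hs | hs
  · rw [Real.sign_of_neg hs] at h₁ h₂
    simp only [Mfun, hs, hs.not_gt, m₁, and_self, false_and, if_true, if_false, and_true]
    constructor
    · linarith
    · split_ifs <;> linarith
  · rw [Real.sign_of_pos hs] at h₁ h₂
    simp only [Mfun, hs, hs.not_gt, m₂, and_self, and_false, if_true, if_false, true_and]
    constructor
    · split_ifs <;> linarith
    · linarith

/-- The only two facts about an admissible `f` that the main argument needs: it is integrable, and
`∫ M(u_f, ·) = u_f`. -/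
lemma integrable_and_integral_proj {L : ℝ} (hL : 0 < L) {f : ℝ → ℝ} (hf : Measurable f)
    (hbf : ∀ᵐ ξ ∂(volume.restrict (Ioo (-L) L)),
      0 ≤ Real.sign ξ * f ξ ∧ Real.sign ξ * f ξ ≤ 1) :
    IntervalIntegrable f volume (-L) L ∧
      ∫ ξ in (-L)..L, proj L f ξ = ∫ ξ in (-L)..L, f ξ := by
  have hLL : -L ≤ L := by linarith
  have h := ae_Mfun_le hbf
  rw [Measure.restrict_congr_set Ioo_ae_eq_Icc] at h
  have h' := h
  rw [Measure.restrict_congr_set Ioc_ae_eq_Icc.symm] at h'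
  have hfi : IntervalIntegrable f volume (-L) L := by
    rw [intervalIntegrable_iff_integrableOn_Ioc_of_le hLL]
    refine integrable_of_le_of_le hf.aestronglyMeasurable (h'.mono fun _ h => h.1)
      (h'.mono fun _ h => h.2) ?_ ?_
    · exact (intervalIntegrable_iff_integrableOn_Ioc_of_le hLL).1 (intervalIntegrable_Mfun _ _ _)
    · exact (intervalIntegrable_iff_integrableOn_Ioc_of_le hLL).1 (intervalIntegrable_Mfun _ _ _)
  have hlow := intervalIntegral.integral_mono_ae_restrict hLL (intervalIntegrable_Mfun _ _ _) hfi
    (h.mono fun _ h => h.1)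
  have hupp := intervalIntegral.integral_mono_ae_restrict hLL hfi (intervalIntegrable_Mfun _ _ _)
    (h.mono fun _ h => h.2)
  rw [integral_Mfun hL le_rfl hLL] at hlow
  rw [integral_Mfun hL hLL le_rfl] at hupp
  exact ⟨hfi, integral_Mfun hL hlow hupp⟩

theorem stmt5 (L : ℝ) (hL : 0 < L) (f g : ℝ → ℝ)
    (hf : Measurable f) (hg : Measurable g)
    (hbf : ∀ᵐ ξ ∂(volume.restrict (Set.Ioo (-L) L)),
      0 ≤ Real.sign ξ * f ξ ∧ Real.sign ξ * f ξ ≤ 1)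
    (hbg : ∀ᵐ ξ ∂(volume.restrict (Set.Ioo (-L) L)),
      0 ≤ Real.sign ξ * g ξ ∧ Real.sign ξ * g ξ ≤ 1) :
    (∫ ξ in (-L)..L,
      if g ξ ≤ f ξ then (proj L f ξ - proj L g ξ) - (f ξ - g ξ) else 0) ≤ 0 := by
  have hLL : -L ≤ L := by linarith
  obtain ⟨hfi, hfp⟩ := integrable_and_integral_proj hL hf hbf
  obtain ⟨hgi, hgp⟩ := integrable_and_integral_proj hL hg hbg
  rcases le_total (∫ ζ in (-L)..L, f ζ) (∫ ζ in (-L)..L, g ζ) with huv | hvu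
  · rw [intervalIntegral.integral_of_le hLL]
    refine integral_nonpos fun ξ => ?_
    have hM : proj L f ξ ≤ proj L g ξ := Mfun_mono huv ξ
    simp only [Pi.zero_apply]
    split_ifs <;> linarith
  · have hpf : IntervalIntegrable (proj L f) volume (-L) L := intervalIntegrable_Mfun _ _ _
    have hpg : IntervalIntegrable (proj L g) volume (-L) L := intervalIntegrable_Mfun _ _ _
    have hint := (hpf.sub hpg).sub (hfi.sub hgi)
    have hzero : ∫ ξ in (-L)..L, ((proj L f ξ - proj L g ξ) - (f ξ - g ξ)) = 0 := by
      rw [intervalIntegral.integral_sub (hpf.sub hpg) (hfi.sub hgi),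
        intervalIntegral.integral_sub hpf hpg, intervalIntegral.integral_sub hfi hgi, hfp, hgp,
        sub_self]
    refine le_of_le_of_eq ?_ hzero
    refine intervalIntegral.integral_mono_on hLL ?_ hint fun ξ _ => ?_
    · rw [intervalIntegrable_iff] at hint ⊢
      exact hint.indicator (measurableSet_le hg hf)
    · have hM : proj L g ξ ≤ proj L f ξ := Mfun_mono hvu ξ
      split_ifs <;> linarith
end

section
/- Let F be a layer solution with data (V, g) and suppose V = ∫_0^L ξ g(ξ) dξ (relaxation case). Set u_∞ = √(2V). Then F(y, ξ) = 0 for every y ≥ 0 and every ξ ∈ (−L, 0), and ∫_{−L}^{L} |F(y, ξ) − M(u_∞, ξ)| dξ → 0 as y → ∞. -/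
/-!
In the relaxation case the incoming data carry the whole flux `V`, so at `y = 0` the nonnegative
quantity `∫_{-L}^0 ξ F(0, ξ) dξ` vanishes and `F(0, ξ) = 0` for almost every `ξ < 0`. Along such a
`ξ`, the function `exp (y / ξ) F(y, ξ)` is nondecreasing (`antitoneOn_exp_mul_of_neg` applied to
`-F`), whereas `F ≤ 0`; hence `F(y, ξ) = 0` for all `y`. Then `u(y) = ∫_0^L F(y, ·) ≥ 0`, the
Maxwellian vanishes at all negative velocities, and for every `ξ < 0` the solution is a constant
multiple of `exp (y / |ξ|)`, which boundedness forces to be zero.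

On `(0, L)` the second moment `P(y) = ∫ ξ² F(y, ξ) dξ` is a Lyapunov functional: it satisfies
`P' = -(V - u² / 2)`. By a quantitative bathtub principle (`bathtub`), the dissipation
`V - u² / 2` bounds `‖F(y, ·) - M(u(y), ·)‖²` in `L¹`, up to a factor `8`; in particular it is
nonnegative. Since `|∂_y F| ≤ 1 / ξ` and `F` is bounded, `u` is uniformly continuous, so
Barbalat's lemma (`barbalat`) gives `V - u(y)² / 2 → 0`. Therefore `u(y) → √(2V)` and
`F(y, ·) - M(u(y), ·) → 0` in `L¹`, and `u ↦ M(u, ·)` is 1-Lipschitz into `L¹`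
(`half_space_relax`).
-/

open MeasureTheory Set Filter

/-- A layer solution with data `(V, g)`: `F : [0,∞) × (-L,L) → ℝ` measurable, with
`0 ≤ sign ξ · F(y,ξ) ≤ 1`; for each `ξ ≠ 0`, `y ↦ F(y,ξ)` is continuous on `[0,∞)`,
differentiable on `(0,∞)` with `ξ ∂_y F = M(u(y),ξ) - F`, `u(y) = ∫_{-L}^L F(y,·)`;
`F(0,ξ) = g(ξ)` on `(0,L)`; and `∫_{-L}^L ξ F(y,ξ) dξ = V` for all `y ≥ 0`. -/
structure IsLayerSolution (L V : ℝ) (g : ℝ → ℝ) (F : ℝ → ℝ → ℝ) : Prop where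
  meas : Measurable (Function.uncurry F)
  sgnBound : ∀ y ξ, 0 ≤ y → ξ ∈ Set.Ioo (-L) L →
    0 ≤ Real.sign ξ * F y ξ ∧ Real.sign ξ * F y ξ ≤ 1
  cont : ∀ ξ ∈ Set.Ioo (-L) L, ξ ≠ 0 → ContinuousOn (fun y => F y ξ) (Set.Ici 0)
  eqn : ∀ ξ ∈ Set.Ioo (-L) L, ξ ≠ 0 → ∀ y : ℝ, 0 < y →
    ∃ d : ℝ, HasDerivAt (fun z => F z ξ) d y ∧
      ξ * d = Mfun (∫ ζ in (-L)..L, F y ζ) ξ - F y ξ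
  bdry : ∀ ξ ∈ Set.Ioo (0 : ℝ) L, F 0 ξ = g ξ
  flux : ∀ y : ℝ, 0 ≤ y → (∫ ξ in (-L)..L, ξ * F y ξ) = V

/-! ### The Maxwellian -/

lemma Mfun_of_pos {u ξ : ℝ} (hξ : 0 < ξ) : Mfun u ξ = if ξ < u then 1 else 0 := by
  unfold Mfun
  by_cases h : ξ < u
  · simp [h, hξ]
  · simp [h, not_lt.2 hξ.le]

lemma Mfun_of_neg {u ξ : ℝ} (hξ : ξ < 0) (hu : 0 ≤ u) : Mfun u ξ = 0 := by
  unfold Mfun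
  rw [if_neg (fun h => absurd h.1 (not_lt.2 hξ.le)),
    if_neg (fun h => absurd (h.1.trans h.2) (not_lt.2 hu))]

lemma Mfun_nonpos_of_neg {u ξ : ℝ} (hξ : ξ < 0) : Mfun u ξ ≤ 0 := by
  unfold Mfun
  rw [if_neg (fun h => absurd h.1 (not_lt.2 hξ.le))]
  split_ifs <;> norm_num

lemma measurable_Mfun (u : ℝ) : Measurable (Mfun u) := by
  unfold Mfun
  refine Measurable.ite ?_ measurable_const (Measurable.ite ?_ measurable_const measurable_const)
  · exact measurableSet_Ioo (a := (0 : ℝ)) (b := u)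
  · exact measurableSet_Ioo (a := u) (b := (0 : ℝ))

lemma Mfun_mem_Icc {u ξ : ℝ} (hξ : 0 < ξ) : Mfun u ξ ∈ Icc (0 : ℝ) 1 := by
  rw [Mfun_of_pos hξ]
  split_ifs <;> simp

lemma integrableOn_of_bdd {a b C : ℝ} {f : ℝ → ℝ} (hf : Measurable f)
    (hb : ∀ ξ ∈ Ioo a b, |f ξ| ≤ C) : IntegrableOn f (Ioo a b) := by
  refine Measure.integrableOn_of_bounded (M := C) ?_ hf.aestronglyMeasurable ?_
  · simp
  · exact (ae_restrict_mem measurableSet_Ioo).mono fun ξ h => hb ξ h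

/-- Moments of the Maxwellian on the positive half-line. -/
lemma integral_mul_Mfun {L u : ℝ} (hu : u ∈ Icc 0 L) (φ : ℝ → ℝ) :
    ∫ ξ in Ioo 0 L, φ ξ * Mfun u ξ = ∫ ξ in (0 : ℝ)..u, φ ξ := by
  have h1 : ∫ ξ in Ioo 0 L, φ ξ * Mfun u ξ = ∫ ξ in Ioo 0 L, (Iio u).indicator φ ξ := by
    refine setIntegral_congr_fun measurableSet_Ioo fun ξ hξ => ?_
    simp only [Mfun_of_pos hξ.1, indicator, mem_Iio]
    split_ifs <;> simp
  have h2 : Ioo 0 L ∩ Iio u = Ioo 0 u := by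
    ext x; simp only [mem_inter_iff, mem_Ioo, mem_Iio]
    constructor
    · rintro ⟨h, h'⟩; exact ⟨h.1, h'⟩
    · rintro ⟨h, h'⟩; exact ⟨⟨h, h'.trans_le hu.2⟩, h'⟩
  rw [h1, setIntegral_indicator measurableSet_Iio, h2, ← integral_Ioc_eq_integral_Ioo,
    intervalIntegral.integral_of_le hu.1]

lemma integral_Mfun_s9 {L u : ℝ} (hu : u ∈ Icc 0 L) : ∫ ξ in Ioo 0 L, Mfun u ξ = u := by
  simpa using integral_mul_Mfun hu (fun _ => 1)

lemma integral_id_mul_Mfun {L u : ℝ} (hu : u ∈ Icc 0 L) :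
    ∫ ξ in Ioo 0 L, ξ * Mfun u ξ = u ^ 2 / 2 := by
  simpa using integral_mul_Mfun hu (fun ξ => ξ)

/-- The map `u ↦ M(u, ·)` is 1-Lipschitz (in fact isometric) from `[0, L]` to `L¹(0, L)`. -/
lemma integral_abs_Mfun_sub_le {L u v : ℝ} (hu : u ∈ Icc 0 L) (hv : v ∈ Icc 0 L) :
    ∫ ξ in Ioo 0 L, |Mfun u ξ - Mfun v ξ| ≤ |u - v| := by
  wlog h : v ≤ u generalizing u v
  · have := this hv hu (not_le.1 h).le
    simpa only [abs_sub_comm] using this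
  have hi : ∀ w, IntegrableOn (Mfun w) (Ioo 0 L) := fun w =>
    integrableOn_of_bdd (C := 1) (measurable_Mfun w) fun ξ hξ => by
      have := Mfun_mem_Icc (u := w) hξ.1
      rw [abs_of_nonneg this.1]; exact this.2
  have h1 : ∫ ξ in Ioo 0 L, |Mfun u ξ - Mfun v ξ| = ∫ ξ in Ioo 0 L, (Mfun u ξ - Mfun v ξ) := by
    refine setIntegral_congr_fun measurableSet_Ioo fun ξ hξ => abs_of_nonneg ?_
    rw [Mfun_of_pos hξ.1, Mfun_of_pos hξ.1]
    split_ifs <;> first | (norm_num; done) | linarith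
  rw [h1, integral_sub (hi u) (hi v), integral_Mfun_s9 hu, integral_Mfun_s9 hv]
  exact le_abs_self _

/-! ### The bathtub principle -/

/-- If `f ≤ k` on `(0, L)` outside a short interval, and `f ≤ k + c` on it, then `∫ f` exceeds
`∫ k` by at most `c` times the length of that interval. -/
lemma integral_le_indicator {L a b c : ℝ} (hab : a ≤ b) (hc : 0 ≤ c)
    {f k : ℝ → ℝ} (hf : IntegrableOn f (Ioo 0 L)) (hk : IntegrableOn k (Ioo 0 L))
    (h : ∀ ξ ∈ Ioo 0 L, f ξ ≤ k ξ + (Ioo a b).indicator (fun _ => c) ξ) :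
    ∫ ξ in Ioo 0 L, f ξ ≤ (∫ ξ in Ioo 0 L, k ξ) + c * (b - a) := by
  have hi : IntegrableOn ((Ioo a b).indicator fun _ => c) (Ioo 0 L) := by
    have : IntegrableOn (fun _ : ℝ => c) (Ioo 0 L) := by simp
    exact IntegrableOn.indicator this measurableSet_Ioo
  have h1 := setIntegral_mono_on hf (hk.add hi) measurableSet_Ioo h
  have h2 : ∫ ξ in Ioo 0 L, (Ioo a b).indicator (fun _ => c) ξ ≤ c * (b - a) := by
    rw [setIntegral_indicator measurableSet_Ioo, setIntegral_const, smul_eq_mul, mul_comm]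
    refine mul_le_mul_of_nonneg_left ?_ hc
    have := measureReal_mono (μ := volume) (s₁ := Ioo 0 L ∩ Ioo a b) (s₂ := Ioo a b)
      inter_subset_right (by simp)
    simpa [hab] using this
  have h3 : ∫ ξ in Ioo 0 L, (k + (Ioo a b).indicator fun _ => c) ξ
      = (∫ ξ in Ioo 0 L, k ξ) + ∫ ξ in Ioo 0 L, (Ioo a b).indicator (fun _ => c) ξ :=
    integral_add hk hi
  linarith

/-- Quantitative bathtub principle: among densities in `[0, 1]` of mass `u`, the Maxwellian
`M(u, ·)` has the least first moment, and the excess moment controls the squared `L¹` distance. -/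
lemma bathtub {L u : ℝ} {f : ℝ → ℝ} (hfm : Measurable f)
    (hf : ∀ ξ ∈ Ioo 0 L, f ξ ∈ Icc (0 : ℝ) 1) (hu : u ∈ Icc 0 L)
    (hmass : ∫ ξ in Ioo 0 L, f ξ = u) :
    (∫ ξ in Ioo 0 L, |f ξ - Mfun u ξ|) ^ 2 ≤ 8 * ((∫ ξ in Ioo 0 L, ξ * f ξ) - u ^ 2 / 2) := by
  have hM : ∀ ξ ∈ Ioo 0 L, Mfun u ξ ∈ Icc (0 : ℝ) 1 := fun ξ hξ => Mfun_mem_Icc hξ.1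
  have hmM := measurable_Mfun u
  have habs : ∀ ξ ∈ Ioo 0 L, |f ξ - Mfun u ξ| ≤ 1 := fun ξ hξ => by
    have h1 := hf ξ hξ; have h2 := hM ξ hξ
    rw [abs_le]; constructor <;> linarith [h1.1, h1.2, h2.1, h2.2]
  have i1 : IntegrableOn f (Ioo 0 L) := integrableOn_of_bdd (C := 1) hfm fun ξ hξ => by
    rw [abs_of_nonneg (hf ξ hξ).1]; exact (hf ξ hξ).2
  have i2 : IntegrableOn (Mfun u) (Ioo 0 L) := integrableOn_of_bdd (C := 1) hmM fun ξ hξ => by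
    rw [abs_of_nonneg (hM ξ hξ).1]; exact (hM ξ hξ).2
  have i3 : IntegrableOn (fun ξ => ξ * f ξ) (Ioo 0 L) :=
    integrableOn_of_bdd (C := L) (measurable_id.mul hfm) fun ξ hξ => by
      rw [abs_of_nonneg (mul_nonneg hξ.1.le (hf ξ hξ).1)]
      nlinarith [hξ.1, hξ.2, (hf ξ hξ).1, (hf ξ hξ).2]
  have i4 : IntegrableOn (fun ξ => ξ * Mfun u ξ) (Ioo 0 L) :=
    integrableOn_of_bdd (C := L) (measurable_id.mul hmM) fun ξ hξ => by
      rw [abs_of_nonneg (mul_nonneg hξ.1.le (hM ξ hξ).1)]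
      nlinarith [hξ.1, hξ.2, (hM ξ hξ).1, (hM ξ hξ).2]
  have i5 : IntegrableOn (fun ξ => |f ξ - Mfun u ξ|) (Ioo 0 L) := (i1.sub i2).abs
  have i34 : IntegrableOn (fun ξ => ξ * f ξ - ξ * Mfun u ξ) (Ioo 0 L) := i3.sub i4
  have i12 : IntegrableOn (fun ξ => u * (f ξ - Mfun u ξ)) (Ioo 0 L) := (i1.sub i2).const_mul u
  -- The excess moment, rewritten using that `f` and `M(u, ·)` have equal mass.
  have hD : ∫ ξ in Ioo 0 L, ((ξ * f ξ - ξ * Mfun u ξ) - u * (f ξ - Mfun u ξ))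
      = (∫ ξ in Ioo 0 L, ξ * f ξ) - u ^ 2 / 2 := by
    rw [integral_sub i34 i12, integral_sub i3 i4, integral_const_mul, integral_sub i1 i2,
      integral_Mfun_s9 hu, integral_id_mul_Mfun hu, hmass]
    ring
  set n := ∫ ξ in Ioo 0 L, |f ξ - Mfun u ξ| with hn
  have hn0 : 0 ≤ n := integral_nonneg fun ξ => abs_nonneg _
  -- Near `ξ = u` use `|f - M| ≤ 1`, elsewhere `|ξ - u| ≥ n / 4`.
  have key := integral_le_indicator (a := u - n / 4) (b := u + n / 4) (c := n / 4)
    (by linarith) (by linarith) (i5.const_mul (n / 4)) (i34.sub i12) (fun ξ hξ => by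
      have hpt : (ξ * f ξ - ξ * Mfun u ξ) - u * (f ξ - Mfun u ξ)
          = |ξ - u| * |f ξ - Mfun u ξ| := by
        rw [Mfun_of_pos hξ.1]
        split_ifs with h
        · rw [abs_of_neg (sub_neg.2 h), abs_of_nonpos (sub_nonpos.2 (hf ξ hξ).2)]; ring
        · rw [abs_of_nonneg (sub_nonneg.2 (not_lt.1 h)), sub_zero,
            abs_of_nonneg (hf ξ hξ).1]; ring
      simp only [Pi.sub_apply]
      rw [hpt]
      have ha := abs_nonneg (f ξ - Mfun u ξ)
      by_cases hm : ξ ∈ Ioo (u - n / 4) (u + n / 4)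
      · rw [indicator_of_mem hm]
        nlinarith [habs ξ hξ, mul_nonneg (abs_nonneg (ξ - u)) ha]
      · rw [indicator_of_notMem hm, add_zero]
        refine mul_le_mul_of_nonneg_right ?_ ha
        by_contra! hlt
        rw [abs_lt] at hlt
        exact hm ⟨by linarith [hlt.1], by linarith [hlt.2]⟩)
  rw [integral_const_mul] at key
  simp only [Pi.sub_apply] at key
  rw [hD, ← hn] at key
  nlinarith

/-! ### Relaxation at positive velocities -/

/-- A form of Barbalat's lemma: a function bounded below whose derivative is `-D` with `D`
nonnegative and uniformly continuous has `D → 0` at infinity. -/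
lemma barbalat {P D : ℝ → ℝ} (hP : ∀ y, 0 < y → HasDerivAt P (-D y) y)
    (hP0 : ∀ y, 0 < y → 0 ≤ P y) (hD : ∀ y, 0 < y → 0 ≤ D y)
    (huc : ∀ ε > 0, ∃ δ > 0, ∀ y z, 0 < y → 0 < z → |y - z| ≤ δ → |D y - D z| ≤ ε) :
    Tendsto D atTop (nhds 0) := by
  have hanti : AntitoneOn P (Ioi 0) := by
    refine antitoneOn_of_deriv_nonpos (convex_Ioi 0)
      (fun y hy => (hP y hy).continuousAt.continuousWithinAt)
      (fun y hy => (hP y (interior_subset hy)).differentiableAt.differentiableWithinAt)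
      (fun y hy => ?_)
    rw [(hP y (interior_subset hy)).deriv]
    linarith [hD y (interior_subset hy)]
  have hQ : Antitone fun y => P (max y 1) := fun a b hab =>
    hanti (mem_Ioi.2 (lt_max_of_lt_right one_pos)) (mem_Ioi.2 (lt_max_of_lt_right one_pos)) (max_le_max_right 1 hab)
  have hQb : BddBelow (range fun y => P (max y 1)) :=
    ⟨0, by rintro _ ⟨y, rfl⟩; exact hP0 _ (lt_max_of_lt_right one_pos)⟩
  have hlim := tendsto_atTop_ciInf hQ hQb
  rw [Metric.tendsto_atTop]
  intro ε hε
  obtain ⟨δ, hδ, hδD⟩ := huc (ε / 2) (by linarith)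
  have hdiff : Tendsto (fun y => P (max y 1) - P (max (y + δ) 1)) atTop (nhds 0) := by
    have := hlim.sub (hlim.comp (tendsto_atTop_add_const_right atTop δ tendsto_id))
    simpa using this
  have hev : ∀ᶠ y in atTop, P (max y 1) - P (max (y + δ) 1) < ε / 2 * δ :=
    hdiff.eventually_lt_const (by positivity)
  obtain ⟨N, hN⟩ := eventually_atTop.1 (hev.and (eventually_ge_atTop 1))
  refine ⟨N, fun y hy => ?_⟩
  obtain ⟨h1, h2⟩ := hN y hy
  rw [max_eq_left h2, max_eq_left (by linarith)] at h1
  obtain ⟨c, hc, hc'⟩ := exists_hasDerivAt_eq_slope P (fun z => -D z)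
    (show y < y + δ by linarith)
    (fun z hz => (hP z (by linarith [hz.1])).continuousAt.continuousWithinAt)
    (fun z hz => hP z (by linarith [hz.1]))
  have hDc : D c < ε / 2 := by
    rw [eq_div_iff (by linarith)] at hc'
    by_contra! hge
    nlinarith
  have := hδD y c (by linarith) (by linarith [hc.1])
    (by rw [abs_le]; constructor <;> linarith [hc.1, hc.2])
  rw [abs_le] at this
  rw [Real.dist_eq, sub_zero, abs_of_nonneg (hD y (by linarith))]
  linarith

/-- Relaxation of the problem restricted to velocities in `(0, L)`. The mass `u` is a separate
argument so that the total mass over `(-L, L)` can be used once it is known to be carried by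
positive velocities. -/
lemma half_space_relax {L V : ℝ} (hL : 0 < L) (hV : V ∈ Icc 0 (L ^ 2 / 2)) {F : ℝ → ℝ → ℝ}
    (hFm : ∀ y, Measurable (F y)) {u : ℝ → ℝ}
    (hu : ∀ y, 0 ≤ y → ∫ ξ in Ioo 0 L, F y ξ = u y)
    (hb : ∀ y, 0 ≤ y → ∀ ξ ∈ Ioo 0 L, F y ξ ∈ Icc (0 : ℝ) 1)
    (hd : ∀ ξ ∈ Ioo 0 L, ∀ y, 0 < y →
      HasDerivAt (fun z => F z ξ) ((Mfun (u y) ξ - F y ξ) / ξ) y)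
    (hflux : ∀ y, 0 ≤ y → ∫ ξ in Ioo 0 L, ξ * F y ξ = V) :
    Tendsto (fun y => ∫ ξ in Ioo 0 L, |F y ξ - Mfun (Real.sqrt (2 * V)) ξ|) atTop (nhds 0) := by
  have hFi : ∀ y, 0 ≤ y → IntegrableOn (F y) (Ioo 0 L) := fun y hy =>
    integrableOn_of_bdd (C := 1) (hFm y) fun ξ hξ => by
      rw [abs_of_nonneg (hb y hy ξ hξ).1]; exact (hb y hy ξ hξ).2
  have hMi : ∀ w, IntegrableOn (Mfun w) (Ioo 0 L) := fun w =>
    integrableOn_of_bdd (C := 1) (measurable_Mfun w) fun ξ hξ => by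
      have := Mfun_mem_Icc (u := w) hξ.1
      rw [abs_of_nonneg this.1]; exact this.2
  have hξFi : ∀ y, 0 ≤ y → IntegrableOn (fun ξ => ξ * F y ξ) (Ioo 0 L) := fun y hy =>
    integrableOn_of_bdd (C := L) (measurable_id.mul (hFm y)) fun ξ hξ => by
      rw [abs_of_nonneg (mul_nonneg hξ.1.le (hb y hy ξ hξ).1)]
      nlinarith [hξ.1, hξ.2, (hb y hy ξ hξ).1, (hb y hy ξ hξ).2]
  have hξMi : ∀ w, IntegrableOn (fun ξ => ξ * Mfun w ξ) (Ioo 0 L) := fun w =>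
    integrableOn_of_bdd (C := L) (measurable_id.mul (measurable_Mfun w)) fun ξ hξ => by
      have := Mfun_mem_Icc (u := w) hξ.1
      rw [abs_of_nonneg (mul_nonneg hξ.1.le this.1)]
      nlinarith [hξ.1, hξ.2, this.1, this.2]
  have huI : ∀ y, 0 ≤ y → u y ∈ Icc 0 L := fun y hy => by
    rw [← hu y hy]
    refine ⟨setIntegral_nonneg measurableSet_Ioo fun ξ hξ => (hb y hy ξ hξ).1, ?_⟩
    have h1 : IntegrableOn (fun _ : ℝ => (1 : ℝ)) (Ioo 0 L) := by simp
    have := setIntegral_mono_on (hFi y hy) h1 measurableSet_Ioo fun ξ hξ => (hb y hy ξ hξ).2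
    simpa [hL.le] using this
  have hbath : ∀ y, 0 ≤ y →
      (∫ ξ in Ioo 0 L, |F y ξ - Mfun (u y) ξ|) ^ 2 ≤ 8 * (V - u y ^ 2 / 2) := fun y hy => by
    have := bathtub (hFm y) (hb y hy) (huI y hy) (hu y hy)
    rwa [hflux y hy] at this
  have hrate : ∀ y, 0 ≤ y → ∀ w, ∀ ξ ∈ Ioo 0 L, |Mfun w ξ - F y ξ| ≤ 1 := fun y hy w ξ hξ => by
    have h1 := hb y hy ξ hξ
    have h2 := Mfun_mem_Icc (u := w) hξ.1
    rw [abs_le]; constructor <;> linarith [h1.1, h1.2, h2.1, h2.2]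
  have hlip : ∀ y z, 0 < y → y < z → ∀ ξ ∈ Ioo 0 L, |F z ξ - F y ξ| ≤ (z - y) / ξ := by
    intro y z hy hyz ξ hξ
    obtain ⟨c, hc, hc'⟩ := exists_hasDerivAt_eq_slope (fun t => F t ξ)
      (fun t => (Mfun (u t) ξ - F t ξ) / ξ) hyz
      (fun t ht => (hd ξ hξ t (by linarith [ht.1])).continuousAt.continuousWithinAt)
      (fun t ht => hd ξ hξ t (by linarith [ht.1]))
    rw [eq_div_iff (by linarith)] at hc'
    rw [← hc', abs_mul, abs_div, abs_of_pos hξ.1, abs_of_pos (sub_pos.2 hyz), div_mul_eq_mul_div]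
    have := hrate c (by linarith [hc.1]) (u c) ξ hξ
    gcongr
    · exact hξ.1.le
    · nlinarith
  -- `∂_y F` blows up like `1/ξ`, so velocities below a cut-off `η` are treated separately.
  have hmod : ∀ η > 0, ∀ y z, 0 < y → y < z → |u z - u y| ≤ (z - y) / η * L + η := by
    intro η hη y z hy hyz
    have hz : 0 ≤ z := by linarith
    have h1 : |u z - u y| ≤ ∫ ξ in Ioo 0 L, |F z ξ - F y ξ| := by
      rw [← hu z hz, ← hu y hy.le, ← integral_sub (hFi z hz) (hFi y hy.le)]
      exact abs_integral_le_integral_abs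
    have hconst : IntegrableOn (fun _ : ℝ => (z - y) / η) (Ioo 0 L) := by simp
    have h2 := integral_le_indicator (a := 0) (b := η) (c := 1) hη.le zero_le_one
      ((hFi z hz).sub (hFi y hy.le)).abs hconst (fun ξ hξ => by
        simp only [Pi.sub_apply]
        by_cases hm : ξ ∈ Ioo 0 η
        · rw [indicator_of_mem hm]
          have : 0 ≤ (z - y) / η := div_nonneg (by linarith) hη.le
          have h1 := hb y hy.le ξ hξ
          have h2 := hb z hz ξ hξ
          rw [abs_le]; constructor <;> linarith [h1.1, h1.2, h2.1, h2.2]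
        · rw [indicator_of_notMem hm, add_zero]
          have hge : η ≤ ξ := by
            by_contra! hlt
            exact hm ⟨hξ.1, hlt⟩
          refine (hlip y z hy hyz ξ hξ).trans ?_
          exact div_le_div_of_nonneg_left (by linarith) hη hge)
    have h3 : ∫ _ in Ioo 0 L, (z - y) / η = (z - y) / η * L := by
      simp [hL.le, mul_comm]
    simp only [Pi.sub_apply] at h2
    linarith
  have huuc : ∀ ε > 0, ∃ δ > 0, ∀ y z, 0 < y → 0 < z → |y - z| ≤ δ → |u y - u z| ≤ ε := by
    intro ε hε
    have hmod' : ∀ y z, 0 < y → y < z → z - y ≤ ε ^ 2 / (4 * L) → |u z - u y| ≤ ε := by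
      intro y z hy hyz hδ
      refine (hmod (ε / 2) (by linarith) y z hy hyz).trans ?_
      have : (z - y) / (ε / 2) * L ≤ ε ^ 2 / (4 * L) / (ε / 2) * L := by gcongr
      have h4 : ε ^ 2 / (4 * L) / (ε / 2) * L = ε / 2 := by field_simp; norm_num
      linarith
    refine ⟨ε ^ 2 / (4 * L), by positivity, fun y z hy hz h => ?_⟩
    rw [abs_le] at h
    rcases lt_trichotomy y z with hyz | rfl | hyz
    · rw [abs_sub_comm]; exact hmod' y z hy hyz (by linarith [h.1])
    · simpa using hε.le
    · exact hmod' z y hz hyz (by linarith [h.2])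
  -- Lyapunov functional: the second moment decreases at the rate of the excess flux.
  have hP : ∀ y, 0 < y → HasDerivAt (fun z => ∫ ξ in Ioo 0 L, ξ ^ 2 * F z ξ)
      (-(V - u y ^ 2 / 2)) y := by
    intro y hy
    have hval : -(V - u y ^ 2 / 2) = ∫ ξ in Ioo 0 L, ξ * (Mfun (u y) ξ - F y ξ) := by
      simp_rw [mul_sub]
      rw [integral_sub (hξMi _) (hξFi y hy.le), integral_id_mul_Mfun (huI y hy.le),
        hflux y hy.le]
      ring
    rw [hval]
    refine (hasDerivAt_integral_of_dominated_loc_of_deriv_le (bound := fun _ => L)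
      (F' := fun z ξ => ξ * (Mfun (u z) ξ - F z ξ)) (s := Ioi 0) (Ioi_mem_nhds hy)
      (Eventually.of_forall fun z => ?_) ?_ ?_ ?_ ?_ ?_).2
    · exact ((measurable_id.pow_const 2).mul (hFm z)).aestronglyMeasurable
    · refine integrableOn_of_bdd (C := L ^ 2) ((measurable_id.pow_const 2).mul (hFm y))
        fun ξ hξ => ?_
      have := hb y hy.le ξ hξ
      change |ξ ^ 2 * F y ξ| ≤ L ^ 2
      rw [abs_of_nonneg (mul_nonneg (sq_nonneg _) this.1)]
      nlinarith [hξ.1, hξ.2, this.1, this.2, sq_nonneg ξ]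
    · exact (measurable_id.mul ((measurable_Mfun _).sub (hFm y))).aestronglyMeasurable
    · refine (ae_restrict_mem measurableSet_Ioo).mono fun ξ hξ z hz => ?_
      rw [Real.norm_eq_abs, abs_mul, abs_of_pos hξ.1]
      have := hrate z (le_of_lt hz) (u z) ξ hξ
      nlinarith [hξ.1, hξ.2, abs_nonneg (Mfun (u z) ξ - F z ξ)]
    · simp
    · refine (ae_restrict_mem measurableSet_Ioo).mono fun ξ hξ z hz => ?_
      have := (hd ξ hξ z hz).const_mul (ξ ^ 2)
      have hval : ξ ^ 2 * ((Mfun (u z) ξ - F z ξ) / ξ) = ξ * (Mfun (u z) ξ - F z ξ) := by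
        have := hξ.1.ne'
        field_simp
      rwa [hval] at this
  have hDlim : Tendsto (fun y => V - u y ^ 2 / 2) atTop (nhds 0) := by
    refine barbalat hP (fun y hy => ?_) (fun y hy => ?_) (fun ε hε => ?_)
    · exact setIntegral_nonneg measurableSet_Ioo fun ξ hξ =>
        mul_nonneg (sq_nonneg _) (hb y hy.le ξ hξ).1
    · have := hbath y hy.le
      nlinarith [sq_nonneg (∫ ξ in Ioo 0 L, |F y ξ - Mfun (u y) ξ|)]
    · obtain ⟨δ, hδ, h⟩ := huuc (ε / L) (by positivity)
      refine ⟨δ, hδ, fun y z hy hz hyz => ?_⟩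
      have h1 := h y z hy hz hyz
      have h2 := huI y hy.le
      have h3 := huI z hz.le
      have h4 : V - u y ^ 2 / 2 - (V - u z ^ 2 / 2) = (u z - u y) * ((u y + u z) / 2) := by ring
      have h5 : |(u y + u z) / 2| ≤ L := by
        rw [abs_of_nonneg (by linarith [h2.1, h3.1])]; linarith [h2.2, h3.2]
      rw [h4, abs_mul, abs_sub_comm]
      calc |u y - u z| * |(u y + u z) / 2| ≤ ε / L * L := by gcongr
        _ = ε := by field_simp
  have hv : Real.sqrt (2 * V) ∈ Icc 0 L :=
    ⟨Real.sqrt_nonneg _, Real.sqrt_le_iff.2 ⟨hL.le, by linarith [hV.2]⟩⟩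
  have hulim : Tendsto u atTop (nhds (Real.sqrt (2 * V))) := by
    have h1 : Tendsto (fun y => Real.sqrt (2 * V - 2 * (V - u y ^ 2 / 2))) atTop
        (nhds (Real.sqrt (2 * V - 2 * 0))) := (tendsto_const_nhds.sub (hDlim.const_mul 2)).sqrt
    rw [mul_zero, sub_zero] at h1
    refine h1.congr' ((eventually_ge_atTop 0).mono fun y hy => ?_)
    rw [show 2 * V - 2 * (V - u y ^ 2 / 2) = u y ^ 2 by ring, Real.sqrt_sq (huI y hy).1]
  have hbound : Tendsto (fun y => Real.sqrt (8 * (V - u y ^ 2 / 2)) + |u y - Real.sqrt (2 * V)|)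
      atTop (nhds 0) := by
    have h1 := (hDlim.const_mul 8).sqrt
    have h2 := (hulim.sub (tendsto_const_nhds (x := Real.sqrt (2 * V)))).abs
    simpa using h1.add h2
  refine tendsto_of_tendsto_of_tendsto_of_le_of_le' tendsto_const_nhds hbound
    (Eventually.of_forall fun y => integral_nonneg fun ξ => abs_nonneg _)
    ((eventually_ge_atTop 0).mono fun y hy => ?_)
  have i1 := ((hFi y hy).sub (hMi (u y))).abs
  have i2 := ((hMi (u y)).sub (hMi (Real.sqrt (2 * V)))).abs
  have i3 := ((hFi y hy).sub (hMi (Real.sqrt (2 * V)))).abs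
  have h1 := integral_mono i3 (i1.add i2) fun ξ => abs_sub_le (F y ξ) (Mfun (u y) ξ) _
  have h1' : ∫ ξ in Ioo 0 L, |F y ξ - Mfun (Real.sqrt (2 * V)) ξ|
      ≤ (∫ ξ in Ioo 0 L, |F y ξ - Mfun (u y) ξ|)
        + ∫ ξ in Ioo 0 L, |Mfun (u y) ξ - Mfun (Real.sqrt (2 * V)) ξ| :=
    h1.trans_eq (integral_add i1 i2)
  have h2 := integral_abs_Mfun_sub_le (huI y hy) hv
  have h3 := Real.le_sqrt_of_sq_le (hbath y hy)
  linarith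

/-! ### Vanishing at negative velocities and conclusion -/

/-- Splitting at zero velocity, where the sign condition gives no bound on the integrand. -/
lemma integral_split {L : ℝ} (hL : 0 < L) {φ : ℝ → ℝ} (h1 : IntegrableOn φ (Ioo (-L) 0))
    (h2 : IntegrableOn φ (Ioo 0 L)) :
    ∫ ξ in (-L)..L, φ ξ = (∫ ξ in Ioo (-L) 0, φ ξ) + ∫ ξ in Ioo 0 L, φ ξ := by
  have hL' : -L ≤ 0 := by linarith
  rw [← intervalIntegral.integral_add_adjacent_intervals (b := 0),
    intervalIntegral.integral_of_le hL', intervalIntegral.integral_of_le hL.le,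
    integral_Ioc_eq_integral_Ioo, integral_Ioc_eq_integral_Ioo]
  · rwa [intervalIntegrable_iff_integrableOn_Ioo_of_le hL']
  · rwa [intervalIntegrable_iff_integrableOn_Ioo_of_le hL.le]

/-- Integrating factor for `ξ ∂_y F = m - F`. -/
lemma hasDerivAt_exp_mul {f : ℝ → ℝ} {ξ d m y : ℝ} (hξ : ξ ≠ 0) (hf : HasDerivAt f d y)
    (h : ξ * d = m - f y) :
    HasDerivAt (fun z => Real.exp (z / ξ) * f z) (Real.exp (y / ξ) * (m / ξ)) y := by
  have h1 := (((hasDerivAt_id y).div_const ξ).exp).mul hf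
  have h2 : d = (m - f y) / ξ := by field_simp; linarith
  have h3 : Real.exp (y / ξ) * (1 / ξ) * f y + Real.exp (y / ξ) * d
      = Real.exp (y / ξ) * (m / ξ) := by rw [h2]; field_simp; ring
  rw [← h3]
  exact h1

/-- For incoming-from-infinity velocities `ξ < 0`, a nonnegative source makes `exp (y / ξ) * f`
decrease. It is used with `-F` to propagate `F(0, ξ) = 0`, and with `F` itself once the source is
known to vanish. -/
lemma antitoneOn_exp_mul_of_neg {f m : ℝ → ℝ} {ξ : ℝ} (hξ : ξ < 0)
    (hc : ContinuousOn f (Ici 0))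
    (hf : ∀ y, 0 < y → ∃ d, HasDerivAt f d y ∧ ξ * d = m y - f y) (hm : ∀ y, 0 < y → 0 ≤ m y) :
    AntitoneOn (fun z => Real.exp (z / ξ) * f z) (Ici 0) := by
  refine antitoneOn_of_deriv_nonpos (convex_Ici 0)
    ((Real.continuous_exp.comp (continuous_id.div_const ξ)).continuousOn.mul hc) ?_ ?_ <;>
    rw [interior_Ici] <;> intro y hy <;> obtain ⟨d, hd, hd'⟩ := hf y hy <;>
    have h := hasDerivAt_exp_mul hξ.ne hd hd'
  · exact h.differentiableAt.differentiableWithinAt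
  · rw [h.deriv]
    exact mul_nonpos_of_nonneg_of_nonpos (Real.exp_pos _).le
      (div_nonpos_of_nonneg_of_nonpos (hm y hy) hξ.le)

theorem stmt9 (L V : ℝ) (hL : 0 < L) (g : ℝ → ℝ) (hgm : Measurable g)
    (hg01 : ∀ ξ ∈ Set.Ioo (0 : ℝ) L, g ξ ∈ Set.Icc (0 : ℝ) 1)
    (hV : V ∈ Set.Icc 0 (L ^ 2 / 2))
    (F : ℝ → ℝ → ℝ) (hF : IsLayerSolution L V g F)
    (hrelax : V = ∫ ξ in (0 : ℝ)..L, ξ * g ξ) :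
    (∀ y : ℝ, 0 ≤ y → ∀ ξ ∈ Set.Ioo (-L) (0 : ℝ), F y ξ = 0) ∧
    Tendsto (fun y => ∫ ξ in (-L)..L, |F y ξ - Mfun (Real.sqrt (2 * V)) ξ|)
      atTop (nhds 0) := by
  have hFm : ∀ y, Measurable (F y) := fun y => hF.meas.comp measurable_prodMk_left
  have hpos : ∀ y, 0 ≤ y → ∀ ξ ∈ Ioo 0 L, F y ξ ∈ Icc (0 : ℝ) 1 := fun y hy ξ hξ => by
    have := hF.sgnBound y ξ hy ⟨by linarith [hξ.1], hξ.2⟩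
    rwa [Real.sign_of_pos hξ.1, one_mul] at this
  have hneg : ∀ y, 0 ≤ y → ∀ ξ ∈ Ioo (-L) 0, F y ξ ∈ Icc (-1 : ℝ) 0 := fun y hy ξ hξ => by
    have := hF.sgnBound y ξ hy ⟨hξ.1, by linarith [hξ.2]⟩
    rw [Real.sign_of_neg hξ.2] at this
    constructor <;> linarith [this.1, this.2]
  have ip : ∀ y, 0 ≤ y → IntegrableOn (F y) (Ioo 0 L) := fun y hy =>
    integrableOn_of_bdd (C := 1) (hFm y) fun ξ hξ => by
      rw [abs_of_nonneg (hpos y hy ξ hξ).1]; exact (hpos y hy ξ hξ).2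
  have iN : ∀ y, 0 ≤ y → IntegrableOn (F y) (Ioo (-L) 0) := fun y hy =>
    integrableOn_of_bdd (C := 1) (hFm y) fun ξ hξ => by
      rw [abs_of_nonpos (hneg y hy ξ hξ).2]; linarith [(hneg y hy ξ hξ).1]
  have ipξ : ∀ y, 0 ≤ y → IntegrableOn (fun ξ => ξ * F y ξ) (Ioo 0 L) := fun y hy =>
    integrableOn_of_bdd (C := L) (measurable_id.mul (hFm y)) fun ξ hξ => by
      have := hpos y hy ξ hξ
      rw [abs_of_nonneg (mul_nonneg hξ.1.le this.1)]
      nlinarith [hξ.1, hξ.2, this.1, this.2]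
  have inξ : ∀ y, 0 ≤ y → IntegrableOn (fun ξ => ξ * F y ξ) (Ioo (-L) 0) := fun y hy =>
    integrableOn_of_bdd (C := L) (measurable_id.mul (hFm y)) fun ξ hξ => by
      have := hneg y hy ξ hξ
      rw [abs_of_nonneg (mul_nonneg_of_nonpos_of_nonpos hξ.2.le this.2)]
      nlinarith [hξ.1, hξ.2, this.1, this.2]
  -- The incoming data already carry the whole flux, so nothing leaves through the boundary.
  have h0 : ∀ᵐ ξ ∂volume.restrict (Ioo (-L) 0), F 0 ξ = 0 := by
    have hfl := hF.flux 0 le_rfl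
    rw [integral_split hL (inξ 0 le_rfl) (ipξ 0 le_rfl)] at hfl
    have hg : ∫ ξ in Ioo 0 L, ξ * F 0 ξ = V := by
      rw [hrelax, intervalIntegral.integral_of_le hL.le, integral_Ioc_eq_integral_Ioo]
      exact setIntegral_congr_fun measurableSet_Ioo fun ξ hξ => by
        simp only [hF.bdry ξ hξ]
    have hz : ∫ ξ in Ioo (-L) 0, ξ * F 0 ξ = 0 := by linarith
    rw [setIntegral_eq_zero_iff_of_nonneg_ae _ (inξ 0 le_rfl)] at hz
    · filter_upwards [hz, ae_restrict_mem measurableSet_Ioo] with ξ h hξ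
      exact (mul_eq_zero.1 h).resolve_left hξ.2.ne
    · filter_upwards [ae_restrict_mem measurableSet_Ioo] with ξ hξ
      exact mul_nonneg_of_nonpos_of_nonpos hξ.2.le (hneg 0 le_rfl ξ hξ).2
  -- A trajectory with `ξ < 0` starting from `0` can only move upwards, against its sign.
  have hae : ∀ y, 0 ≤ y → ∀ᵐ ξ ∂volume.restrict (Ioo (-L) 0), F y ξ = 0 := by
    intro y hy
    filter_upwards [h0, ae_restrict_mem measurableSet_Ioo] with ξ h hξ
    have hξ' : ξ ∈ Ioo (-L) L := ⟨hξ.1, by linarith [hξ.2]⟩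
    have hanti := antitoneOn_exp_mul_of_neg (f := fun z => -F z ξ)
      (m := fun z => -Mfun (∫ ζ in (-L)..L, F z ζ) ξ) hξ.2
      (hF.cont ξ hξ' hξ.2.ne).neg
      (fun z hz => by
        obtain ⟨d, hd, hd'⟩ := hF.eqn ξ hξ' hξ.2.ne z hz
        exact ⟨-d, hd.neg, by linarith⟩)
      (fun z _ => neg_nonneg.2 (Mfun_nonpos_of_neg hξ.2))
    have := hanti (mem_Ici.2 le_rfl) (mem_Ici.2 hy) hy
    simp only [h, neg_zero, mul_zero] at this
    have h2 := nonpos_of_mul_nonpos_right this (Real.exp_pos _)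
    linarith [(hneg y hy ξ hξ).2]
  have hu : ∀ y, 0 ≤ y → ∫ ζ in (-L)..L, F y ζ = ∫ ξ in Ioo 0 L, F y ξ := fun y hy => by
    rw [integral_split hL (iN y hy) (ip y hy), integral_eq_zero_of_ae (hae y hy), zero_add]
  have hu0 : ∀ y, 0 ≤ y → 0 ≤ ∫ ζ in (-L)..L, F y ζ := fun y hy => by
    rw [hu y hy]
    exact setIntegral_nonneg measurableSet_Ioo fun ξ hξ => (hpos y hy ξ hξ).1
  -- Now `M(u(y), ξ) = 0` for every `ξ < 0`, so `F` is a bounded multiple of `exp (y / |ξ|)`.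
  have hzero : ∀ y, 0 ≤ y → ∀ ξ ∈ Ioo (-L) 0, F y ξ = 0 := by
    intro y hy ξ hξ
    have hξ' : ξ ∈ Ioo (-L) L := ⟨hξ.1, by linarith [hξ.2]⟩
    have hanti := antitoneOn_exp_mul_of_neg (f := fun z => F z ξ)
      (m := fun z => Mfun (∫ ζ in (-L)..L, F z ζ) ξ) hξ.2
      (hF.cont ξ hξ' hξ.2.ne) (fun z hz => hF.eqn ξ hξ' hξ.2.ne z hz)
      (fun z hz => (Mfun_of_neg hξ.2 (hu0 z hz.le)).ge)
    have hlim : Tendsto (fun z => -Real.exp (z / ξ)) atTop (nhds (-0)) :=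
      (Real.tendsto_exp_atBot.comp (tendsto_id.atTop_div_const_of_neg hξ.2)).neg
    have hge : -0 ≤ Real.exp (y / ξ) * F y ξ := by
      refine le_of_tendsto hlim ((eventually_ge_atTop y).mono fun z hz => ?_)
      have h1 := hanti (mem_Ici.2 hy) (mem_Ici.2 (hy.trans hz)) hz
      have h2 := (hneg z (hy.trans hz) ξ hξ).1
      simp only at h1
      nlinarith [Real.exp_pos (z / ξ)]
    rw [neg_zero] at hge
    exact le_antisymm (hneg y hy ξ hξ).2 (nonneg_of_mul_nonneg_right hge (Real.exp_pos _))
  refine ⟨hzero, ?_⟩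
  have hmain := half_space_relax hL hV hFm (u := fun y => ∫ ζ in (-L)..L, F y ζ)
    (fun y hy => (hu y hy).symm) hpos
    (fun ξ hξ y hy => by
      obtain ⟨d, hd, hd'⟩ := hF.eqn ξ ⟨by linarith [hξ.1], hξ.2⟩ hξ.1.ne' y hy
      rw [← hd', mul_div_cancel_left₀ _ hξ.1.ne']
      exact hd)
    (fun y hy => by
      have := hF.flux y hy
      rwa [integral_split hL (inξ y hy) (ipξ y hy), setIntegral_eq_zero_of_forall_eq_zero
        (fun ξ hξ => by rw [hzero y hy ξ hξ, mul_zero]), zero_add] at this)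
  refine hmain.congr' ((eventually_ge_atTop 0).mono fun y hy => ?_)
  have hz : ∀ ξ ∈ Ioo (-L) 0, |F y ξ - Mfun (Real.sqrt (2 * V)) ξ| = 0 := fun ξ hξ => by
    rw [hzero y hy ξ hξ, Mfun_of_neg hξ.2 (Real.sqrt_nonneg _), sub_zero, abs_zero]
  have hm : Measurable fun ξ => |F y ξ - Mfun (Real.sqrt (2 * V)) ξ| :=
    ((hFm y).sub (measurable_Mfun _)).norm
  have j1 : IntegrableOn (fun ξ => |F y ξ - Mfun (Real.sqrt (2 * V)) ξ|) (Ioo (-L) 0) :=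
    integrableOn_of_bdd (C := 0) hm fun ξ hξ => by rw [hz ξ hξ, abs_zero]
  have j2 : IntegrableOn (fun ξ => |F y ξ - Mfun (Real.sqrt (2 * V)) ξ|) (Ioo 0 L) :=
    integrableOn_of_bdd (C := 1) hm fun ξ hξ => by
      have h1 := hpos y hy ξ hξ
      have h2 := Mfun_mem_Icc (u := Real.sqrt (2 * V)) hξ.1
      rw [abs_abs, abs_le]
      constructor <;> linarith [h1.1, h1.2, h2.1, h2.2]
  beta_reduce
  rw [integral_split hL j1 j2, setIntegral_eq_zero_of_forall_eq_zero hz, zero_add]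
end
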